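/- arXiv:2407.07549 — 6 statements merged into one kernel-verified Lean document; each statement's English description precedes it below -/
import Mathlib

section
/- Let (X,d) and (Y,ρ) be metric spaces, let F be a family (an upward hereditary collection) of subsets of ℕ, and let g : X → Y be a homeomorphism such that g⁻¹ is uniformly continuous on Y. If f : X → X is a continuous map that is positively F-expansive, then h = g ∘ f ∘ g⁻¹ : Y → Y is positively F-expansive. -/
/-- `N_f(x,y,δ) = {n ∈ ℕ, n ≥ 1 : d(fⁿ x, fⁿ y) > δ}`. -/
def posNset {X : Type*} [MetricSpace X] (f : X → X) (x y : X) (δ : ℝ) : Set ℕ :=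
  {n : ℕ | 1 ≤ n ∧ δ < dist (f^[n] x) (f^[n] y)}

/-!
The map `φ = g⁻¹` is an injective semiconjugacy from `h` to `f`, so it carries `h`-orbits to
`f`-orbits. Uniform continuity of `φ`, read contrapositively, turns separation of the image orbits
by `δ` into separation of the original ones by some `η` independent of the points and of the time.
-/

section Semiconj

variable {X Y : Type*} [MetricSpace X] [MetricSpace Y] {φ : Y → X} {h : Y → Y} {f : X → X}

theorem posNset_subset_of_semiconj (hsemi : Function.Semiconj φ h f) {δ η : ℝ}
    (hsep : ∀ x y : Y, δ < dist (φ x) (φ y) → η < dist x y) (x y : Y) :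
    posNset f (φ x) (φ y) δ ⊆ posNset h x y η := by
  rintro n ⟨hn, hdist⟩
  rw [← hsemi.iterate_right n x, ← hsemi.iterate_right n y] at hdist
  exact ⟨hn, hsep _ _ hdist⟩

theorem stmt_4_general {F : Set (Set ℕ)} (hF : IsUpperSet F) (hsemi : Function.Semiconj φ h f)
    (hinj : Function.Injective φ) (hφ : UniformContinuous φ)
    (hexp : ∃ δ > (0 : ℝ), ∀ x y : X, x ≠ y → posNset f x y δ ∈ F) :
    ∃ η > (0 : ℝ), ∀ x y : Y, x ≠ y → posNset h x y η ∈ F := by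
  obtain ⟨δ, hδ, hexp⟩ := hexp
  obtain ⟨η, hη, hclose⟩ := Metric.uniformContinuous_iff_le.mp hφ δ hδ
  have hsep (x y : Y) : δ < dist (φ x) (φ y) → η < dist x y :=
    lt_imp_lt_of_le_imp_le fun hle => hclose hle
  exact ⟨η, hη, fun x y hxy =>
    hF (posNset_subset_of_semiconj hsemi hsep x y) (hexp _ _ (hinj.ne hxy))⟩

end Semiconj

theorem stmt_4 {X Y : Type*} [MetricSpace X] [MetricSpace Y]
    (F : Set (Set ℕ)) (hF : ∀ B ∈ F, ∀ C : Set ℕ, B ⊆ C → C ∈ F)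
    (g : X ≃ₜ Y) (hg : UniformContinuous (g.symm : Y → X))
    (f : X → X) (hf : Continuous f)
    (hexp : ∃ δ > (0 : ℝ), ∀ x y : X, x ≠ y → posNset f x y δ ∈ F) :
    ∃ η > (0 : ℝ), ∀ x y : Y, x ≠ y →
      posNset (⇑g ∘ f ∘ ⇑g.symm) x y η ∈ F :=
  stmt_4_general (fun B C hBC hB => hF B hB C hBC)
    (fun y => g.symm_apply_apply (f (g.symm y))) g.symm.injective hg hexp
end

section
/- Let (X,d) and (Y,ρ) be metric spaces, let F be a family (an upward hereditary collection) of subsets of ℕ, and let f : X → X and g : Y → Y be continuous maps. Equip X × Y with the metric D((x₁,x₂),(y₁,y₂)) = max{d(x₁,y₁), ρ(x₂,y₂)}. Then the product map f × g : X × Y → X × Y is positively F-expansive if and only if both f and g are positively F-expansive. -/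
/-!
For the max metric, `N_{f × g}(p, q, δ) = N_f(p₁, q₁, δ) ∪ N_g(p₂, q₂, δ)`. If `p` and `q` agree in
one coordinate, the corresponding set is empty when `0 ≤ δ`, so expansivity of the product passes to
each factor with the same constant. Conversely, distinct points of the product differ in some
coordinate, and upward heredity absorbs the other set of the union. It also lets constants be
decreased, so that `f` and `g` can be given a common one.
-/

section Separation

variable {X Y : Type*} [MetricSpace X] [MetricSpace Y]

theorem posNset_antitone (f : X → X) (x y : X) : Antitone (posNset f x y) :=
  fun _ _ hδε _ hn => ⟨hn.1, hδε.trans_lt hn.2⟩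

theorem posNset_self (f : X → X) (x : X) {δ : ℝ} (hδ : 0 ≤ δ) : posNset f x x δ = ∅ :=
  Set.eq_empty_of_forall_notMem fun n hn => hδ.not_gt (dist_self (f^[n] x) ▸ hn.2)

theorem posNset_prodMap (f : X → X) (g : Y → Y) (p q : X × Y) (δ : ℝ) :
    posNset (Prod.map f g) p q δ = posNset f p.1 q.1 δ ∪ posNset g p.2 q.2 δ := by
  ext n
  simp only [posNset, Prod.map_iterate, Prod.dist_eq, Prod.map_fst, Prod.map_snd, lt_max_iff,
    Set.mem_union, Set.mem_ofPred_eq, and_or_left]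

end Separation

/-- `δ` is an `F`-expansivity constant for `f`: `N_f(x,y,δ) ∈ F` whenever `x ≠ y`. Positivity of
`δ` is not part of this definition; it is imposed in `PositivelyExpansive`. -/
def IsExpansivityConstant {X : Type*} [MetricSpace X] (F : Set (Set ℕ)) (f : X → X) (δ : ℝ) :
    Prop :=
  ∀ x y : X, x ≠ y → posNset f x y δ ∈ F

/-- Positive `F`-expansivity of `f`, for an arbitrary collection `F` of subsets of `ℕ`; that `F` is
a family in the sense of the paper is expressed separately by `IsUpperSet F`. -/
def PositivelyExpansive {X : Type*} [MetricSpace X] (F : Set (Set ℕ)) (f : X → X) : Prop :=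
  ∃ δ > (0 : ℝ), IsExpansivityConstant F f δ

section Expansivity

variable {X Y : Type*} [MetricSpace X] [MetricSpace Y] {F : Set (Set ℕ)} {f : X → X} {g : Y → Y}
  {δ ε : ℝ}

namespace IsExpansivityConstant

theorem anti (hF : IsUpperSet F) (hδε : δ ≤ ε) (hε : IsExpansivityConstant F f ε) :
    IsExpansivityConstant F f δ :=
  fun x y hxy => hF (posNset_antitone f x y hδε) (hε x y hxy)

theorem fst_of_prodMap [Nonempty Y] (hδ : 0 ≤ δ)
    (h : IsExpansivityConstant F (Prod.map f g) δ) : IsExpansivityConstant F f δ := by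
  intro x x' hx
  obtain ⟨y⟩ := ‹Nonempty Y›
  have hmem := h (x, y) (x', y) fun heq => hx (congrArg Prod.fst heq)
  rwa [posNset_prodMap, posNset_self g y hδ, Set.union_empty] at hmem

theorem snd_of_prodMap [Nonempty X] (hδ : 0 ≤ δ)
    (h : IsExpansivityConstant F (Prod.map f g) δ) : IsExpansivityConstant F g δ := by
  intro y y' hy
  obtain ⟨x⟩ := ‹Nonempty X›
  have hmem := h (x, y) (x, y') fun heq => hy (congrArg Prod.snd heq)
  rwa [posNset_prodMap, posNset_self f x hδ, Set.empty_union] at hmem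

theorem prodMap (hF : IsUpperSet F) (hf : IsExpansivityConstant F f δ)
    (hg : IsExpansivityConstant F g δ) : IsExpansivityConstant F (Prod.map f g) δ := by
  intro p q hpq
  rw [posNset_prodMap]
  obtain hfst | hsnd : p.1 ≠ q.1 ∨ p.2 ≠ q.2 := by
    rwa [ne_eq, Prod.ext_iff, not_and_or] at hpq
  · exact hF Set.subset_union_left (hf _ _ hfst)
  · exact hF Set.subset_union_right (hg _ _ hsnd)

end IsExpansivityConstant

namespace PositivelyExpansive

theorem fst_of_prodMap [Nonempty Y] (h : PositivelyExpansive F (Prod.map f g)) :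
    PositivelyExpansive F f :=
  let ⟨δ, hδ, hconst⟩ := h
  ⟨δ, hδ, hconst.fst_of_prodMap hδ.le⟩

theorem snd_of_prodMap [Nonempty X] (h : PositivelyExpansive F (Prod.map f g)) :
    PositivelyExpansive F g :=
  let ⟨δ, hδ, hconst⟩ := h
  ⟨δ, hδ, hconst.snd_of_prodMap hδ.le⟩

theorem prodMap (hF : IsUpperSet F) (hf : PositivelyExpansive F f)
    (hg : PositivelyExpansive F g) : PositivelyExpansive F (Prod.map f g) :=
  let ⟨δ, hδ, hfδ⟩ := hf
  let ⟨ε, hε, hgε⟩ := hg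
  ⟨min δ ε, lt_min hδ hε, (hfδ.anti hF (min_le_left δ ε)).prodMap hF
    (hgε.anti hF (min_le_right δ ε))⟩

end PositivelyExpansive

end Expansivity

theorem stmt_5_general {X Y : Type*} [MetricSpace X] [MetricSpace Y] [Nonempty X] [Nonempty Y]
    {F : Set (Set ℕ)} (hF : IsUpperSet F) (f : X → X) (g : Y → Y) :
    PositivelyExpansive F (Prod.map f g) ↔ PositivelyExpansive F f ∧ PositivelyExpansive F g :=
  ⟨fun h => ⟨h.fst_of_prodMap, h.snd_of_prodMap⟩, fun ⟨hf, hg⟩ => hf.prodMap hF hg⟩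

/- Note: the product `X × Y` carries Mathlib's sup metric
`dist (x₁,x₂) (y₁,y₂) = max (dist x₁ y₁) (dist x₂ y₂)`. -/
theorem stmt_5 {X Y : Type*} [MetricSpace X] [MetricSpace Y] [Nonempty X] [Nonempty Y]
    (F : Set (Set ℕ)) (hF : ∀ B ∈ F, ∀ C : Set ℕ, B ⊆ C → C ∈ F)
    (f : X → X) (g : Y → Y) (hf : Continuous f) (hg : Continuous g) :
    (∃ δ > (0 : ℝ), ∀ p q : X × Y, p ≠ q → posNset (Prod.map f g) p q δ ∈ F) ↔
      ((∃ δ > (0 : ℝ), ∀ x y : X, x ≠ y → posNset f x y δ ∈ F) ∧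
        (∃ δ > (0 : ℝ), ∀ x y : Y, x ≠ y → posNset g x y δ ∈ F)) :=
  stmt_5_general (fun B C hBC hB => hF B hB C hBC) f g
end

section
/- Let (X,d) be a metric space and f : X → X a uniformly continuous map. If f is positively F_t-expansive, then for every m ∈ ℕ with m ≥ 1 the iterate f^m is positively F_t-expansive. -/
/-- `A ⊆ ℕ` is thick: it contains blocks of consecutive integers of arbitrary length. -/
def IsThickNat (A : Set ℕ) : Prop :=
  ∀ k : ℕ, ∃ a : ℕ, ∀ i ≤ k, a + i ∈ A

/-!
A block of `m * (k + 1)` consecutive integers contains `k + 1` consecutive multiples of `m`, so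
dividing by `m` turns a thick set into a thick set. Applied to the times at which the orbits under
`f` are `δ`-apart, this shows that `f^[m]` is expansive with the same constant `δ`.
-/

theorem IsThickNat.exists_Icc_subset {A : Set ℕ} (hA : IsThickNat A) (k : ℕ) :
    ∃ a, Set.Icc a (a + k) ⊆ A := by
  obtain ⟨a, ha⟩ := hA k
  refine ⟨a, fun n ⟨han, hnk⟩ => ?_⟩
  obtain ⟨i, rfl⟩ := Nat.exists_eq_add_of_le han
  exact ha i (Nat.add_le_add_iff_left.mp hnk)

theorem IsThickNat.preimage_mul_left {A : Set ℕ} (hA : IsThickNat A) {m : ℕ} (hm : 0 < m) :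
    IsThickNat ((m * ·) ⁻¹' A) := by
  intro k
  obtain ⟨a, ha⟩ := hA.exists_Icc_subset (m * (k + 1))
  refine ⟨a / m + 1, fun i hik => ha ⟨?_, ?_⟩⟩
  · calc
      a ≤ m * (a / m + 1) := (Nat.lt_mul_div_succ a hm).le
      _ ≤ m * (a / m + 1 + i) := Nat.mul_le_mul_left m (Nat.le_add_right _ i)
  · calc
      m * (a / m + 1 + i) = m * (a / m) + m * (i + 1) := by ring
      _ ≤ a + m * (k + 1) := by gcongr; exact Nat.mul_div_le a m

theorem posNset_iterate {X : Type*} [MetricSpace X] (f : X → X) (x y : X) (δ : ℝ) {m : ℕ}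
    (hm : 0 < m) : posNset f^[m] x y δ = (m * ·) ⁻¹' posNset f x y δ := by
  ext n
  simp [posNset, Function.iterate_mul, Nat.one_le_iff_ne_zero, hm.ne']

theorem stmt_7_general {X : Type*} [MetricSpace X] (f : X → X) {δ : ℝ}
    (hexp : ∀ x y : X, x ≠ y → IsThickNat (posNset f x y δ)) {m : ℕ} (hm : 0 < m) :
    ∀ x y : X, x ≠ y → IsThickNat (posNset f^[m] x y δ) := by
  intro x y hxy
  rw [posNset_iterate f x y δ hm]
  exact (hexp x y hxy).preimage_mul_left hm

theorem stmt_7 {X : Type*} [MetricSpace X] (f : X → X) (hf : UniformContinuous f)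
    (hexp : ∃ δ > (0 : ℝ), ∀ x y : X, x ≠ y → IsThickNat (posNset f x y δ)) :
    ∀ m : ℕ, 1 ≤ m →
      ∃ η > (0 : ℝ), ∀ x y : X, x ≠ y → IsThickNat (posNset f^[m] x y η) := by
  obtain ⟨δ, hδ, hthick⟩ := hexp
  exact fun m hm => ⟨δ, hδ, stmt_7_general f hthick hm⟩
end

section
/- Let (X,d) be a metric space, let m ∈ ℕ with m ≥ 1, and let f : X → X be a uniformly continuous map. If the iterate f^m is positively F_t-expansive, then f is positively F_t-expansive. -/
/-!
Let `n ≥ 1` and `q = ⌈n / m⌉`, so that `m * q = j + n` for some `j < m`. If two points are more than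
`δ` apart at time `m * q`, then, by the common modulus of continuity of `f^[0], …, f^[m - 1]`, they
were already more than some `η` apart at time `n`, where `η` depends only on `δ`. The separation
times of `f` thus contain the preimage under `n ↦ ⌈n / m⌉` of those of `f^[m]`, and taking this
preimage preserves thickness because it stretches every block by the factor `m`.
-/

theorem IsThickNat.mono {A B : Set ℕ} (hA : IsThickNat A) (hAB : A ⊆ B) : IsThickNat B := fun k =>
  (hA k).imp fun _ ha i hi => hAB (ha i hi)

theorem IsThickNat.preimage_ceilDiv {A : Set ℕ} (hA : IsThickNat A) {m : ℕ} (hm : 0 < m) :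
    IsThickNat ((· ⌈/⌉ m) ⁻¹' A) := by
  intro k
  obtain ⟨a, ha⟩ := hA k
  refine ⟨m * a, fun i hi => ?_⟩
  have hceil : (m * a + i) ⌈/⌉ m = a + i ⌈/⌉ m := by
    rw [Nat.ceilDiv_eq_add_pred_div, Nat.ceilDiv_eq_add_pred_div, add_assoc,
      Nat.add_sub_assoc (by omega), Nat.mul_add_div hm]
  have hle : i ⌈/⌉ m ≤ i := (ceilDiv_le_iff_le_mul hm).2 (Nat.le_mul_of_pos_left i hm)
  rw [Set.mem_preimage, hceil]
  exact ha _ (hle.trans hi)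

theorem exists_lt_add_eq_mul_ceilDiv {m : ℕ} (hm : 0 < m) (n : ℕ) :
    ∃ j < m, j + n = m * (n ⌈/⌉ m) := by
  have hle : n ≤ m * (n ⌈/⌉ m) := (ceilDiv_le_iff_le_mul hm).1 le_rfl
  have hlt : m * (n ⌈/⌉ m) < n + m := by
    have := Nat.mul_div_le (n + m - 1) m
    rw [Nat.ceilDiv_eq_add_pred_div]
    omega
  exact ⟨m * (n ⌈/⌉ m) - n, by omega, Nat.sub_add_cancel hle⟩

theorem exists_lt_dist_of_uniformEquicontinuous {ι X Y : Type*} [PseudoMetricSpace X]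
    [PseudoMetricSpace Y] {F : ι → X → Y} (hF : UniformEquicontinuous F) {δ : ℝ} (hδ : 0 < δ) :
    ∃ η > 0, ∀ x y i, δ < dist (F i x) (F i y) → η < dist x y := by
  obtain ⟨ε, hε, hmod⟩ := Metric.uniformEquicontinuous_iff.1 hF δ hδ
  refine ⟨ε / 2, half_pos hε, fun x y i hlt => ?_⟩
  by_contra! hle
  exact hlt.not_gt (hmod x y (hle.trans_lt (half_lt_self hε)) i)

theorem preimage_ceilDiv_posNset_iterate_subset {X : Type*} [MetricSpace X] {f : X → X} {m : ℕ}
    (hm : 0 < m) {δ η : ℝ}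
    (hsep : ∀ x y, ∀ j < m, δ < dist (f^[j] x) (f^[j] y) → η < dist x y) (x y : X) :
    (· ⌈/⌉ m) ⁻¹' posNset f^[m] x y δ ⊆ posNset f x y η := by
  rintro n ⟨hpos, hlt⟩
  have hn : n ≠ 0 := by
    rintro rfl
    simp at hpos
  obtain ⟨j, hj, hjn⟩ := exists_lt_add_eq_mul_ceilDiv hm n
  refine ⟨Nat.one_le_iff_ne_zero.2 hn, hsep _ _ j hj ?_⟩
  rwa [← Function.iterate_add_apply, ← Function.iterate_add_apply, hjn, Function.iterate_mul]

theorem stmt_8 {X : Type*} [MetricSpace X] (m : ℕ) (hm : 1 ≤ m)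
    (f : X → X) (hf : UniformContinuous f)
    (hexp : ∃ δ > (0 : ℝ), ∀ x y : X, x ≠ y → IsThickNat (posNset f^[m] x y δ)) :
    ∃ η > (0 : ℝ), ∀ x y : X, x ≠ y → IsThickNat (posNset f x y η) := by
  obtain ⟨δ, hδ, hthick⟩ := hexp
  have hequi : UniformEquicontinuous fun j : Fin m => f^[j] :=
    uniformEquicontinuous_finite.2 fun j => UniformContinuous.iterate f j hf
  obtain ⟨η, hη, hsep⟩ := exists_lt_dist_of_uniformEquicontinuous hequi hδ
  refine ⟨η, hη, fun x y hxy => ((hthick x y hxy).preimage_ceilDiv hm).mono ?_⟩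
  exact preimage_ceilDiv_posNset_iterate_subset hm (fun u v j hj => hsep u v ⟨j, hj⟩) x y
end

section
/- Let (X,d) be a compact metric space containing infinitely many points. There is no homeomorphism f : X → X that is expansive and F_s-expansive; that is, if f : X → X is an expansive homeomorphism, then for every ε > 0 there exist distinct points x, y ∈ X such that N_f(x,y,ε) = {n ∈ ℤ, n ≠ 0 : d(f^n(x), f^n(y)) > ε} is not a syndetic subset of ℤ. -/
/-- For a bijection `f`, `N_f(x,y,δ) = {n ∈ ℤ, n ≠ 0 : d(fⁿ x, fⁿ y) > δ}`. -/
def zNset {X : Type*} [MetricSpace X] (f : Equiv.Perm X) (x y : X) (δ : ℝ) : Set ℤ :=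
  {n : ℤ | n ≠ 0 ∧ δ < dist ((f ^ n) x) ((f ^ n) y)}

/-- `T ⊆ ℤ` is syndetic (for the semigroup `(ℤ,+)`): there is a finite set `K`
such that for every `s ∈ ℤ` some `k ∈ K` has `k + s ∈ T`. -/
def IsSyndeticZ (T : Set ℤ) : Prop :=
  ∃ K : Finset ℤ, ∀ s : ℤ, ∃ k ∈ K, k + s ∈ T

/-!
A syndetic subset of `ℤ` is unbounded above, so it suffices to find distinct points that stay
`ε`-close at all positive times. If there were none, `f` would be positively expansive, and an
injective continuous map of a compact space with this property forces the space to be finite.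
Indeed, by compactness, `V`-closeness at times `1, …, N` then yields `V`-closeness at time `0`,
hence closeness over a window of length `N` propagates to the whole past. On an infinite compact
space the pigeonhole principle gives distinct points `x`, `y` whose orbits are very close at
arbitrarily large times, so these orbits are `V`-close at all times and `x = y`.
-/

open Filter Dynamics
open scoped Uniformity Topology

lemma IsSyndeticZ.not_bddAbove {T : Set ℤ} (hT : IsSyndeticZ T) : ¬ BddAbove T := by
  rintro ⟨b, hb⟩
  obtain ⟨K, hK⟩ := hT
  obtain ⟨a, ha⟩ := K.bddBelow
  obtain ⟨k, hkK, hkT⟩ := hK (b + 1 - a)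
  have hak : a ≤ k := ha hkK
  have hkb : k + (b + 1 - a) ≤ b := hb hkT
  omega

section Entourage

variable {X : Type*} {f : X → X} {V : SetRel X X}

lemma mem_dynEntourage_succ {n : ℕ} {x y : X} :
    (x, y) ∈ dynEntourage f V (n + 1) ↔ (x, y) ∈ V ∧ (f x, f y) ∈ dynEntourage f V n := by
  simp only [mem_dynEntourage, Nat.forall_lt_succ_left, Function.iterate_zero, id_eq,
    Function.iterate_succ_apply]

lemma mem_dynEntourage_add_of_iterate_mem {N : ℕ}
    (hN : ∀ x y, (f x, f y) ∈ dynEntourage f V N → (x, y) ∈ V) (k : ℕ) {x y : X}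
    (hxy : (f^[k] x, f^[k] y) ∈ dynEntourage f V N) : (x, y) ∈ dynEntourage f V (N + k) := by
  induction k generalizing x y with
  | zero => exact hxy
  | succ k ih =>
    have hfut : (f x, f y) ∈ dynEntourage f V (N + k) := ih hxy
    exact mem_dynEntourage_succ.2
      ⟨hN x y (dynEntourage_antitone f V (Nat.le_add_right N k) hfut), hfut⟩

lemma exists_ne_frequently_mem_of_totallyBounded {ι Y : Type*} [UniformSpace X] [Infinite Y]
    (hX : TotallyBounded (Set.univ : Set X)) {l : Filter ι} [l.NeBot] (g : ι → Y → X)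
    (hV : V ∈ 𝓤 X) : ∃ x y, x ≠ y ∧ ∃ᶠ i in l, (g i x, g i y) ∈ V := by
  obtain ⟨W, hW, hWsymm, hWV⟩ := comp_symm_mem_uniformity_sets hV
  obtain ⟨t, htfin, hcover⟩ := hX W hW
  have : Finite t := htfin
  -- Passing to an ultrafilter makes the choice of a center near `g i y` independent of `i`.
  have hcenter (y : Y) : ∃ c : t, ∀ᶠ i in Ultrafilter.of l, (g i y, (c : X)) ∈ W :=
    Ultrafilter.eventually_exists_iff.1 <| .of_forall fun i ↦ by
      simpa using hcover (Set.mem_univ (g i y))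
  choose c hc using hcenter
  obtain ⟨x, y, hne, hcxy⟩ := Finite.exists_ne_map_eq_of_infinite c
  refine ⟨x, y, hne, Frequently.filter_mono (Eventually.frequently ?_) (Ultrafilter.of_le l)⟩
  filter_upwards [hc x, hc y] with i hx hy
  exact hWV ⟨c y, hcxy ▸ hx, SetRel.symm W hy⟩

end Entourage

/-- `f` is positively expansive with respect to the relation `V` (typically an entourage): two
points whose forward orbits are `V`-close at all times coincide. -/
def IsPositivelyExpansiveWith {X : Type*} (f : X → X) (V : SetRel X X) : Prop :=
  ∀ ⦃x y : X⦄, (∀ n, (f^[n] x, f^[n] y) ∈ V) → x = y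

namespace IsPositivelyExpansiveWith

variable {X : Type*} {f : X → X} {V W : SetRel X X}

lemma mono (h : IsPositivelyExpansiveWith f V) (hWV : W ⊆ V) : IsPositivelyExpansiveWith f W :=
  fun _ _ hxy ↦ h fun n ↦ hWV (hxy n)

variable [UniformSpace X] [CompactSpace X]

lemma exists_forall_mem_of_map_mem_dynEntourage (h : IsPositivelyExpansiveWith f V)
    (hf : Continuous f) (hinj : f.Injective) (hV : V ∈ 𝓤 X) (hVc : IsClosed V) :
    ∃ N, ∀ x y, (f x, f y) ∈ dynEntourage f V N → (x, y) ∈ V := by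
  let C (N : ℕ) : Set (X × X) := Prod.map f f ⁻¹' dynEntourage f V N
  have hC_anti : Antitone C := fun _ _ hmn ↦ Set.preimage_mono (dynEntourage_antitone f V hmn)
  have hff : Continuous (Prod.map f f) := hf.prodMap hf
  have hC_closed (N : ℕ) : IsClosed (C N) :=
    (isClosed_biInter fun k _ ↦ hVc.preimage (hff.iterate k)).preimage hff
  have hC_diag : ∀ p ∈ ⋂ N, C N, V ∈ 𝓝 p := by
    rintro ⟨x, y⟩ hxy
    have hfxy : f x = f y := h fun n ↦
      mem_dynEntourage.1 (Set.mem_iInter.1 hxy (n + 1)) n n.lt_succ_self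
    obtain rfl : x = y := hinj hfxy
    exact nhds_le_uniformity x hV
  obtain ⟨N, hN⟩ := exists_subset_nhds_of_compactSpace hC_anti.directed_ge hC_closed hC_diag
  exact ⟨N, fun x y hxy ↦ hN hxy⟩

theorem finite (h : IsPositivelyExpansiveWith f V) (hf : Continuous f) (hinj : f.Injective)
    (hV : V ∈ 𝓤 X) : Finite X := by
  obtain ⟨V', hV', hV'c, hV'V⟩ := mem_uniformity_isClosed hV
  have h' : IsPositivelyExpansiveWith f V' := h.mono hV'V
  obtain ⟨N, hN⟩ := h'.exists_forall_mem_of_map_mem_dynEntourage hf hinj hV' hV'c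
  have hE : dynEntourage f V' N ∈ 𝓤 X :=
    dynEntourage_mem_uniformity (CompactSpace.uniformContinuous_of_continuous hf) hV' N
  by_contra hfin
  have : Infinite X := not_finite_iff_infinite.1 hfin
  obtain ⟨x, y, hne, hclose⟩ :=
    exists_ne_frequently_mem_of_totallyBounded isCompact_univ.totallyBounded (l := atTop)
      (fun k : ℕ ↦ f^[k]) hE
  refine hne (h' fun n ↦ ?_)
  obtain ⟨k, hnk, hk⟩ := frequently_atTop.1 hclose (n + 1)
  exact mem_dynEntourage.1 (mem_dynEntourage_add_of_iterate_mem hN k hk) n (by omega)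

end IsPositivelyExpansiveWith

theorem exists_ne_forall_iterate_mem {X : Type*} [UniformSpace X] [CompactSpace X] [Infinite X]
    {f : X → X} (hf : Continuous f) (hinj : f.Injective) {V : SetRel X X} (hV : V ∈ 𝓤 X) :
    ∃ x y, x ≠ y ∧ ∀ n, (f^[n] x, f^[n] y) ∈ V := by
  by_contra! hsep
  have hexp : IsPositivelyExpansiveWith f V := fun x y hxy ↦ by_contra fun hne ↦
    let ⟨n, hn⟩ := hsep x y hne
    hn (hxy n)
  have : Finite X := hexp.finite hf hinj hV
  exact not_finite X

theorem stmt_13_general {X : Type*} [MetricSpace X] [CompactSpace X] [Infinite X]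
    (f : Equiv.Perm X) (hf : Continuous f) {ε : ℝ} (hε : 0 < ε) :
    ∃ x y : X, x ≠ y ∧ ¬ IsSyndeticZ (zNset f x y ε) := by
  obtain ⟨x, y, hne, hclose⟩ :=
    exists_ne_forall_iterate_mem hf f.injective (Metric.dist_mem_uniformity hε)
  have hnonpos : zNset f x y ε ⊆ Set.Iic 0 := by
    rintro n ⟨-, hfar⟩
    by_contra hn
    lift n to ℕ using (not_le.1 hn).le
    exact hfar.not_gt (hclose n)
  exact ⟨x, y, hne, fun hsynd ↦ hsynd.not_bddAbove (bddAbove_Iic.mono hnonpos)⟩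

theorem stmt_13 {X : Type*} [MetricSpace X] [CompactSpace X] [Infinite X]
    (f : Equiv.Perm X) (hf : Continuous ⇑f) (hf' : Continuous ⇑f.symm)
    (δ : ℝ) (hδ : 0 < δ)
    (hexp : ∀ x y : X, x ≠ y → (zNset f x y δ).Nonempty) :
    ∀ ε > (0 : ℝ), ∃ x y : X, x ≠ y ∧ ¬ IsSyndeticZ (zNset f x y ε) :=
  fun _ hε ↦ stmt_13_general f hf hε
end

section
/- Let (X,d) be a compact metric space, f : X → X a homeomorphism, and F a family (an upward hereditary collection) of subsets of ℤ \ {0}. Let X_f = { (x_i)_{i∈ℤ} ∈ X^ℤ : f(x_i) = x_{i+1} for all i ∈ ℤ } be the inverse limit space with metric d̄(x̄, ȳ) = Σ_{i∈ℤ} d(x_i, y_i)/2^{|i|}, and let σ_f : X_f → X_f be the shift homeomorphism σ_f((x_i)_{i∈ℤ}) = (x_{i+1})_{i∈ℤ}. Then f is F-expansive if and only if σ_f is F-expansive. -/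
/-- The inverse limit space `X_f = {(xᵢ)_{i∈ℤ} : f(xᵢ) = x_{i+1}}`. -/
def invLimit {X : Type*} (f : Equiv.Perm X) : Set (ℤ → X) :=
  {x : ℤ → X | ∀ i : ℤ, f (x i) = x (i + 1)}

/-- The metric `d̄(x̄,ȳ) = Σ_{i∈ℤ} d(xᵢ,yᵢ)/2^{|i|}` on the inverse limit space. -/
noncomputable def dbar {X : Type*} [MetricSpace X] (x y : ℤ → X) : ℝ :=
  ∑' i : ℤ, dist (x i) (y i) / 2 ^ i.natAbs

open Set Filter

theorem uniformContinuous_tsum {ι α E : Type*} [UniformSpace α] [NormedAddCommGroup E]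
    [CompleteSpace E] {g : ι → α → E} {u : ι → ℝ} (hg : ∀ i, UniformContinuous (g i))
    (hu : Summable u) (hgu : ∀ i a, ‖g i a‖ ≤ u i) : UniformContinuous fun a => ∑' i, g i a :=
  (tendstoUniformly_tsum hu hgu).uniformContinuous <| Frequently.of_forall fun s => by
    simpa only [Finset.sum_fn] using Finset.uniformContinuous_sum s fun i _ => hg i

theorem uniformContinuous_perm_zpow {X : Type*} [UniformSpace X] {f : Equiv.Perm X}
    (hf : UniformContinuous f) (hf' : UniformContinuous f.symm) (n : ℤ) :
    UniformContinuous ⇑(f ^ n) := by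
  cases n with
  | ofNat n => exact hf.iterate f n
  | negSucc n =>
    rw [zpow_negSucc, ← inv_pow]
    exact hf'.iterate _ (n + 1)

theorem summable_const_div_two_pow_natAbs (C : ℝ) :
    Summable fun i : ℤ => C / 2 ^ i.natAbs := by
  have h : Summable fun n : ℕ => C / 2 ^ n := by
    simpa [div_eq_mul_inv] using summable_geometric_two.mul_left C
  exact Summable.of_nat_of_neg (by simpa using h) (by simpa using h)

theorem dist_div_two_pow_le_diam_div {X : Type*} [PseudoMetricSpace X] [BoundedSpace X]
    (x y : X) (n : ℕ) : dist x y / 2 ^ n ≤ Metric.diam (univ : Set X) / 2 ^ n := by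
  gcongr
  exact Metric.dist_le_diam_of_mem BoundedSpace.bounded_univ (mem_univ x) (mem_univ y)

section Dbar

variable {X : Type*} [MetricSpace X]

theorem dbar_self (x : ℤ → X) : dbar x x = 0 := by
  simp [dbar]

variable [BoundedSpace X]

theorem dist_apply_zero_le_dbar (x y : ℤ → X) : dist (x 0) (y 0) ≤ dbar x y := by
  have hs : Summable fun i : ℤ => dist (x i) (y i) / 2 ^ i.natAbs :=
    (summable_const_div_two_pow_natAbs _).of_nonneg_of_le (fun _ => by positivity)
      fun _ => dist_div_two_pow_le_diam_div _ _ _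
  simpa [dbar] using hs.le_tsum 0 fun _ _ => by positivity

theorem uniformContinuous_dbar :
    UniformContinuous fun p : (ℤ → X) × (ℤ → X) => dbar p.1 p.2 := by
  refine uniformContinuous_tsum (fun i => ?_)
    (summable_const_div_two_pow_natAbs (Metric.diam (univ : Set X))) fun i p => ?_
  · have hproj := Pi.uniformContinuous_proj (fun _ : ℤ => X) i
    have hdist := (hproj.comp uniformContinuous_fst).dist (hproj.comp uniformContinuous_snd)
    exact hdist.div_const' _
  · rw [Real.norm_of_nonneg (by positivity)]
    exact dist_div_two_pow_le_diam_div _ _ _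

end Dbar

/-- The two-sided orbit `(f ^ i x)_{i ∈ ℤ}` of `x`, the point of the inverse limit space lying
over `x` under the projection to the zeroth coordinate. -/
def fullOrbit {X : Type*} (f : Equiv.Perm X) (x : X) : ℤ → X :=
  fun i => (f ^ i) x

section FullOrbit

variable {X : Type*} (f : Equiv.Perm X)

theorem fullOrbit_injective : Function.Injective (fullOrbit f) :=
  fun _ _ h => congrFun h 0

theorem fullOrbit_shift (x : X) (n : ℤ) :
    (fun i => fullOrbit f x (i + n)) = fullOrbit f ((f ^ n) x) := by
  funext i
  simp only [fullOrbit, zpow_add, Equiv.Perm.mul_apply]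

theorem fullOrbit_mem_invLimit (x : X) : fullOrbit f x ∈ invLimit f := by
  intro i
  simp only [fullOrbit, add_comm i 1, zpow_one_add, Equiv.Perm.mul_apply]

variable {f} in
theorem fullOrbit_apply_zero_of_mem_invLimit {x : ℤ → X} (hx : x ∈ invLimit f) :
    fullOrbit f (x 0) = x := by
  have horbit := fullOrbit_mem_invLimit f (x 0)
  funext i
  induction i using Int.induction_on with
  | zero => rfl
  | succ k ih => rw [← horbit, ih, hx]
  | pred k ih =>
    apply f.injective
    rw [horbit, hx, sub_add_cancel, ih]

theorem range_fullOrbit : range (fullOrbit f) = invLimit f :=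
  Subset.antisymm (range_subset_iff.2 (fullOrbit_mem_invLimit f))
    fun x hx => ⟨x 0, fullOrbit_apply_zero_of_mem_invLimit hx⟩

variable {f} in
theorem uniformContinuous_fullOrbit [UniformSpace X] (hf : UniformContinuous f)
    (hf' : UniformContinuous f.symm) : UniformContinuous (fullOrbit f) :=
  uniformContinuous_pi.2 (uniformContinuous_perm_zpow hf hf')

end FullOrbit

/-- The distance `d̄` between full orbits, that is, the metric of the inverse limit space
transported to `X`. -/
noncomputable def orbitDist {X : Type*} [MetricSpace X] (f : Equiv.Perm X) (x y : X) : ℝ :=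
  dbar (fullOrbit f x) (fullOrbit f y)

section OrbitDist

variable {X : Type*} [MetricSpace X] [BoundedSpace X]

theorem dist_le_orbitDist (f : Equiv.Perm X) (x y : X) : dist x y ≤ orbitDist f x y :=
  dist_apply_zero_le_dbar (fullOrbit f x) (fullOrbit f y)

theorem exists_lt_dist_of_lt_orbitDist {f : Equiv.Perm X} (hf : UniformContinuous f)
    (hf' : UniformContinuous f.symm) {δ : ℝ} (hδ : 0 < δ) :
    ∃ ε > 0, ∀ x y, δ < orbitDist f x y → ε < dist x y := by
  have horbit := uniformContinuous_fullOrbit hf hf'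
  have hcont : UniformContinuous fun p : X × X => orbitDist f p.1 p.2 :=
    uniformContinuous_dbar.comp (horbit.prodMap horbit)
  obtain ⟨ε, hε, hclose⟩ := Metric.uniformContinuous_iff_le.1 hcont δ hδ
  refine ⟨ε, hε, fun x y hxy => ?_⟩
  contrapose! hxy
  have hdist : dist (orbitDist f x y) (orbitDist f y y) ≤ δ :=
    @hclose (x, y) (y, y) (by simpa [Prod.dist_eq, hε.le] using hxy)
  rw [orbitDist, orbitDist, dbar_self, Real.dist_0_eq_abs] at hdist
  exact (le_abs_self _).trans hdist

end OrbitDist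

/-- `F`-expansivity of the bijection `f`, with separation measured by an arbitrary function `ρ` in
place of a metric, so that different distances on the same space can be compared. -/
def IsExpansiveWith {X : Type*} (F : Set (Set ℤ)) (ρ : X → X → ℝ) (f : Equiv.Perm X) : Prop :=
  ∃ δ > (0 : ℝ), ∀ x y, x ≠ y → {n : ℤ | n ≠ 0 ∧ δ < ρ ((f ^ n) x) ((f ^ n) y)} ∈ F

namespace IsExpansiveWith

variable {X : Type*} {F : Set (Set ℤ)} {f : Equiv.Perm X}

theorem mono {ρ₁ ρ₂ : X → X → ℝ}
    (hF : ∀ B ∈ F, ∀ C : Set ℤ, B ⊆ C → C ⊆ {n : ℤ | n ≠ 0} → C ∈ F)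
    (hρ : ∀ δ > 0, ∃ ε > 0, ∀ x y, δ < ρ₁ x y → ε < ρ₂ x y)
    (h : IsExpansiveWith F ρ₁ f) : IsExpansiveWith F ρ₂ f := by
  obtain ⟨δ, hδ, hsep⟩ := h
  obtain ⟨ε, hε, hlt⟩ := hρ δ hδ
  exact ⟨ε, hε, fun x y hxy => hF _ (hsep x y hxy) _
    (fun _ hn => ⟨hn.1, hlt _ _ hn.2⟩) fun _ hn => hn.1⟩

theorem orbitDist_iff_shift [MetricSpace X] :
    IsExpansiveWith F (orbitDist f) f ↔
      ∃ δ > (0 : ℝ), ∀ x y : ℤ → X, x ∈ invLimit f → y ∈ invLimit f → x ≠ y →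
        {n : ℤ | n ≠ 0 ∧ δ < dbar (fun i => x (i + n)) (fun i => y (i + n))} ∈ F := by
  refine exists_congr fun δ => and_congr_right fun _ => ⟨fun h x y hx hy hxy => ?_,
    fun h x y hxy => ?_⟩
  · rw [← range_fullOrbit] at hx hy
    obtain ⟨x, rfl⟩ := hx
    obtain ⟨y, rfl⟩ := hy
    simpa only [fullOrbit_shift, orbitDist] using h x y (ne_of_apply_ne _ hxy)
  · simpa only [fullOrbit_shift, orbitDist] using h _ _ (fullOrbit_mem_invLimit f x)
      (fullOrbit_mem_invLimit f y) ((fullOrbit_injective f).ne hxy)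

end IsExpansiveWith

theorem stmt_14_general {X : Type*} [MetricSpace X] [BoundedSpace X]
    (f : Equiv.Perm X) (hf : UniformContinuous f) (hf' : UniformContinuous f.symm)
    (F : Set (Set ℤ))
    (hF : ∀ B ∈ F, ∀ C : Set ℤ, B ⊆ C → C ⊆ {n : ℤ | n ≠ 0} → C ∈ F) :
    (∃ δ > (0 : ℝ), ∀ x y : X, x ≠ y → zNset f x y δ ∈ F) ↔
      (∃ δ > (0 : ℝ), ∀ x y : ℤ → X, x ∈ invLimit f → y ∈ invLimit f → x ≠ y →
        {n : ℤ | n ≠ 0 ∧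
          δ < dbar (fun i => x (i + n)) (fun i => y (i + n))} ∈ F) := by
  rw [← IsExpansiveWith.orbitDist_iff_shift]
  change IsExpansiveWith F dist f ↔ IsExpansiveWith F (orbitDist f) f
  exact ⟨.mono hF fun δ hδ => ⟨δ, hδ, fun x y h => h.trans_le (dist_le_orbitDist f x y)⟩,
    .mono hF fun _ hδ => exists_lt_dist_of_lt_orbitDist hf hf' hδ⟩

/-- `f` is `F`-expansive iff the shift `σ_f` on the inverse limit space `X_f` is
`F`-expansive.  The `n`-th iterate (`n ∈ ℤ`) of the shift `σ_f((xᵢ)) = (x_{i+1})`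
on `X_f` is `x ↦ (i ↦ x (i + n))`. -/
theorem stmt_14 {X : Type*} [MetricSpace X] [CompactSpace X]
    (f : Equiv.Perm X) (hf : Continuous ⇑f) (hf' : Continuous ⇑f.symm)
    (F : Set (Set ℤ))
    (hF : ∀ B ∈ F, ∀ C : Set ℤ, B ⊆ C → C ⊆ {n : ℤ | n ≠ 0} → C ∈ F) :
    (∃ δ > (0 : ℝ), ∀ x y : X, x ≠ y → zNset f x y δ ∈ F) ↔
      (∃ δ > (0 : ℝ), ∀ x y : ℤ → X, x ∈ invLimit f → y ∈ invLimit f → x ≠ y →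
        {n : ℤ | n ≠ 0 ∧
          δ < dbar (fun i => x (i + n)) (fun i => y (i + n))} ∈ F) :=
  stmt_14_general f (CompactSpace.uniformContinuous_of_continuous hf)
    (CompactSpace.uniformContinuous_of_continuous hf') F hF
end
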